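/- Discrete Itô formula (Lemma 3.1, second identity). Let a ∈ ℝ^d, h > 0, and let f = (f¹,…,f^d) : h²ℤ₊ × G(a,h) → ℝ^d be a time-dependent vector field such that for each fixed t ∈ h²ℤ₊ the field f(t,·) is discrete conservative on G(a,h). Let X_r = (X_r¹,…,X_r^d) (r ≥ 1) with each X_r^j ∈ {−1,1}, set S_0 = a, S_n = a + h(X_1 + ⋯ + X_n), and t_r = r h². Then for every n ≥ 1: T_{S_0}^{S_n}(f(t_n,·), γ'₀) h = Σ_{r=1}^{n} T_{S_0}^{S_r}( f(t_r,·) − f(t_{r−1},·), γ'₀) h + Σ_{r=1}^{n} Σ_{j=1}^{d} f^j(t_{r−1}, S_{r−1} + Σ_{i=1}^{j−1} h X_r^i e_i) · h X_r^j + ½ Σ_{r=1}^{n} Σ_{j=1}^{d} [ f^j(t_{r−1}, S_{r−1} + Σ_{i=1}^{j} h X_r^i e_i) − f^j(t_{r−1}, S_{r−1} + Σ_{i=1}^{j−1} h X_r^i e_i) ] / (h X_r^j) · h². -/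

import Mathlib

/- Shared discrete-path infrastructure. -/

namespace DiscretePaths

/-- The sign `±1` associated to a boolean orientation. -/
noncomputable def sgn (b : Bool) : ℝ := if b then 1 else -1

/-- The vector `μ h e_j` of an oriented grid edge, where the edge is encoded as
`e = (j, b)` with `μ = sgn b`. -/
noncomputable def stepVec (d : ℕ) (h : ℝ) (e : Fin d × Bool) : Fin d → ℝ :=
  fun i => if i = e.1 then sgn e.2 * h else 0

/-- The endpoint of a discrete path starting at `b`, given by its list of oriented edges. -/
noncomputable def pathEnd (d : ℕ) (h : ℝ) (b : Fin d → ℝ) :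
    List (Fin d × Bool) → (Fin d → ℝ)
  | [] => b
  | e :: γ => pathEnd d h (fun i => b i + stepVec d h e i) γ

/-- The trapezoidal sum `T_γ(f, γ'₀) h` of the vector field `f` over the discrete path
starting at `b` with oriented edges `γ`. -/
noncomputable def trapSum (d : ℕ) (h : ℝ) (f : (Fin d → ℝ) → Fin d → ℝ)
    (b : Fin d → ℝ) : List (Fin d × Bool) → ℝ
  | [] => 0
  | e :: γ => h / 2 * sgn e.2 * (f b e.1 + f (fun i => b i + stepVec d h e i) e.1)
      + trapSum d h f (fun i => b i + stepVec d h e i) γ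

/-- Membership in the grid `G(a,h) = a + hℤ^d`. -/
def InGrid (d : ℕ) (a : Fin d → ℝ) (h : ℝ) (x : Fin d → ℝ) : Prop :=
  ∃ k : Fin d → ℤ, ∀ i, x i = a i + h * k i

/-- A vector field on the grid `G(a,h)` is discrete conservative if its trapezoidal sum
over every closed discrete path vanishes. -/
def DiscreteConservative (d : ℕ) (a : Fin d → ℝ) (h : ℝ)
    (f : (Fin d → ℝ) → Fin d → ℝ) : Prop :=
  ∀ b, InGrid d a h b → ∀ γ : List (Fin d × Bool), pathEnd d h b γ = b →
    trapSum d h f b γ = 0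

end DiscretePaths

open DiscretePaths

namespace DiscretePaths

theorem pathEnd_append (d : ℕ) (h : ℝ) (γ δ : List (Fin d × Bool)) (b : Fin d → ℝ) :
    pathEnd d h b (γ ++ δ) = pathEnd d h (pathEnd d h b γ) δ := by
  induction γ generalizing b with
  | nil => rfl
  | cons e γ ih => simp only [List.cons_append, pathEnd]; exact ih _

theorem trapSum_append (d : ℕ) (h : ℝ) (f : (Fin d → ℝ) → Fin d → ℝ)
    (γ δ : List (Fin d × Bool)) (b : Fin d → ℝ) :
    trapSum d h f b (γ ++ δ) = trapSum d h f b γ + trapSum d h f (pathEnd d h b γ) δ := by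
  induction γ generalizing b with
  | nil => simp [trapSum, pathEnd]
  | cons e γ ih => simp only [List.cons_append, pathEnd, trapSum]; rw [ih]; ring

theorem trapSum_sub (d : ℕ) (h : ℝ) (f g : (Fin d → ℝ) → Fin d → ℝ)
    (γ : List (Fin d × Bool)) (b : Fin d → ℝ) :
    trapSum d h (fun x j => f x j - g x j) b γ = trapSum d h f b γ - trapSum d h g b γ := by
  induction γ generalizing b with
  | nil => simp [trapSum]
  | cons e γ ih => simp only [trapSum]; rw [ih]; ring

theorem sgn_not (b : Bool) : sgn (!b) = - sgn b := by
  cases b <;> simp [sgn]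

theorem step_back (d : ℕ) (h : ℝ) (b : Fin d → ℝ) (e : Fin d × Bool) :
    (fun i => (b i + stepVec d h e i) + stepVec d h (e.1, !e.2) i) = b := by
  funext i
  simp only [stepVec, sgn_not]
  split_ifs <;> ring

theorem exists_rev (d : ℕ) (h : ℝ) (f : (Fin d → ℝ) → Fin d → ℝ)
    (γ : List (Fin d × Bool)) (b : Fin d → ℝ) :
    ∃ δ : List (Fin d × Bool), pathEnd d h (pathEnd d h b γ) δ = b ∧
      trapSum d h f (pathEnd d h b γ) δ = - trapSum d h f b γ := by
  induction γ generalizing b with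
  | nil => exact ⟨[], rfl, by simp [trapSum]⟩
  | cons e γ ih =>
    obtain ⟨δ, h1, h2⟩ := ih (fun i => b i + stepVec d h e i)
    refine ⟨δ ++ [(e.1, !e.2)], ?_, ?_⟩
    · rw [pathEnd_append]
      simp only [pathEnd]
      rw [h1]
      exact step_back d h b e
    · rw [trapSum_append]
      simp only [pathEnd, trapSum]
      rw [h1, h2, step_back d h b e, sgn_not]
      ring

theorem indep (d : ℕ) (a : Fin d → ℝ) (h : ℝ) (f : (Fin d → ℝ) → Fin d → ℝ)
    (hf : DiscreteConservative d a h f) (γ δ : List (Fin d × Bool))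
    (he : pathEnd d h a γ = pathEnd d h a δ) :
    trapSum d h f a γ = trapSum d h f a δ := by
  obtain ⟨ρ, h1, h2⟩ := exists_rev d h f δ a
  have := hf a ⟨0, by simp⟩ (γ ++ ρ) (by rw [pathEnd_append, he, h1])
  rw [trapSum_append, he, h2] at this
  linarith

theorem exists_step (d : ℕ) (h : ℝ) (f : (Fin d → ℝ) → Fin d → ℝ) (b : Fin d → ℝ)
    (x : Fin d → ℝ) (hx : ∀ j, x j = 1 ∨ x j = -1) (k : ℕ) (hk : k ≤ d) :
    ∃ δ : List (Fin d × Bool),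
      pathEnd d h b δ = (fun i => b i + if (i : ℕ) < k then h * x i else 0) ∧
      trapSum d h f b δ = ∑ j : Fin d, if (j : ℕ) < k then h / 2 * x j *
        (f (fun i => b i + if (i : ℕ) < (j : ℕ) then h * x i else 0) j
          + f (fun i => b i + if (i : ℕ) ≤ (j : ℕ) then h * x i else 0) j) else 0 := by
  induction k with
  | zero => exact ⟨[], by simp [pathEnd], by simp [trapSum]⟩
  | succ k ih =>
    obtain ⟨δ, h1, h2⟩ := ih (by omega)
    let m : Fin d := ⟨k, by omega⟩
    obtain ⟨s, hs⟩ : ∃ s : Bool, sgn s = x m := by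
      rcases hx m with hp | hm
      · exact ⟨true, by simp [sgn, hp]⟩
      · exact ⟨false, by simp [sgn, hm]⟩
    have hstep : (fun i => (b i + if (i : ℕ) < k then h * x i else 0) + stepVec d h (m, s) i)
        = (fun i => b i + if (i : ℕ) ≤ k then h * x i else 0) := by
      funext i
      simp only [stepVec, hs]
      rcases lt_trichotomy (i : ℕ) k with hi | hi | hi
      · have : i ≠ m := fun e => by simp [e, m] at hi
        simp [this, hi, hi.le]
      · have : i = m := Fin.ext hi
        subst this
        simp [m, mul_comm]
      · have : i ≠ m := fun e => by simp [e, m] at hi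
        simp [this, hi.not_gt, hi.not_ge]
    refine ⟨δ ++ [(m, s)], ?_, ?_⟩
    · rw [pathEnd_append, h1]
      simp only [pathEnd]
      rw [hstep]
      simp only [Nat.lt_succ_iff]
    · rw [trapSum_append, h1, h2]
      simp only [trapSum]
      rw [hstep, hs, add_zero]
      have key : ∀ F : Fin d → ℝ, (∑ j : Fin d, if (j : ℕ) < k + 1 then F j else 0)
          = (∑ j : Fin d, if (j : ℕ) < k then F j else 0) + F m := by
        intro F
        have : F m = ∑ j : Fin d, if j = m then F j else 0 := by simp
        rw [this, ← Finset.sum_add_distrib]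
        refine Finset.sum_congr rfl fun i _ => ?_
        rcases lt_trichotomy (i : ℕ) k with hi | hi | hi
        · have : i ≠ m := fun e => by simp [e, m] at hi
          simp [this, hi, Nat.lt_succ_of_lt hi]
        · have : i = m := Fin.ext hi
          simp [this, m]
        · have : i ≠ m := fun e => by simp [e, m] at hi
          have h3 : ¬ (i : ℕ) < k + 1 := by omega
          simp [this, hi.not_gt, h3]
      rw [key]

end DiscretePaths

/-- **Discrete Itô formula** (Lemma 3.1, second identity).  Since `f(t,·)` is discrete
conservative for each `t`, trapezoidal sums between two grid points are path
independent; accordingly the identity is stated for an arbitrary discrete path `γ` from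
`S_0 = a` to `S_n` and arbitrary discrete paths `γr r` from `S_0` to `S_r`. -/
theorem discrete_ito
    (d : ℕ) (a : Fin d → ℝ) (h : ℝ) (hh : 0 < h)
    (f : ℕ → (Fin d → ℝ) → Fin d → ℝ)
    (hf : ∀ t : ℕ, DiscreteConservative d a h (f t))
    (X : ℕ → Fin d → ℝ)
    (hX : ∀ r : ℕ, ∀ j : Fin d, X r j = 1 ∨ X r j = -1)
    (S : ℕ → Fin d → ℝ)
    (hS : ∀ n i, S n i = a i + h * ∑ r ∈ Finset.range n, X (r + 1) i)
    (n : ℕ) (hn : 1 ≤ n)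
    (γ : List (Fin d × Bool)) (hγ : pathEnd d h a γ = S n)
    (γr : ℕ → List (Fin d × Bool)) (hγr : ∀ r, pathEnd d h a (γr r) = S r) :
    trapSum d h (f n) a γ
      = (∑ r ∈ Finset.Icc 1 n,
          trapSum d h (fun x j => f r x j - f (r - 1) x j) a (γr r))
        + (∑ r ∈ Finset.Icc 1 n, ∑ j : Fin d,
            f (r - 1) (fun i => S (r - 1) i + if (i : ℕ) < (j : ℕ) then h * X r i else 0) j
              * (h * X r j))
        + 1 / 2 * ∑ r ∈ Finset.Icc 1 n, ∑ j : Fin d,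
            (f (r - 1) (fun i => S (r - 1) i + if (i : ℕ) ≤ (j : ℕ) then h * X r i else 0) j
              - f (r - 1) (fun i => S (r - 1) i + if (i : ℕ) < (j : ℕ) then h * X r i else 0) j)
              / (h * X r j) * h ^ 2 := by
  clear hn
  induction n generalizing γ with
  | zero =>
    have h0 : S 0 = a := by funext i; simp [hS]
    rw [h0] at hγ
    simpa using hf 0 a ⟨0, by simp⟩ γ hγ
  | succ n ih =>
    have IH := ih (γr n) (hγr n)
    obtain ⟨δ, h1, h2⟩ := exists_step d h (f n) (S n) (X (n + 1)) (hX (n + 1)) d le_rfl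
    have hend : pathEnd d h a (γr n ++ δ) = S (n + 1) := by
      rw [pathEnd_append, hγr, h1]
      funext i
      simp only [i.isLt, if_true, hS, Finset.sum_range_succ]
      ring
    have e1 := indep d a h (f (n + 1)) (hf _) γ (γr (n + 1)) (by rw [hγ, hγr])
    have e2 := indep d a h (f n) (hf _) (γr (n + 1)) (γr n ++ δ) (by rw [hend, hγr])
    rw [trapSum_append, hγr] at e2
    have e3 := trapSum_sub d h (f (n + 1)) (f n) (γr (n + 1)) a
    have e4 : trapSum d h (f n) (S n) δ = (∑ j : Fin d,
        f n (fun i => S n i + if (i : ℕ) < (j : ℕ) then h * X (n + 1) i else 0) j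
              * (h * X (n + 1) j))
        + 1 / 2 * ∑ j : Fin d,
            (f n (fun i => S n i + if (i : ℕ) ≤ (j : ℕ) then h * X (n + 1) i else 0) j
              - f n (fun i => S n i + if (i : ℕ) < (j : ℕ) then h * X (n + 1) i else 0) j)
              / (h * X (n + 1) j) * h ^ 2 := by
      rw [h2, Finset.mul_sum, ← Finset.sum_add_distrib]
      refine Finset.sum_congr rfl fun j _ => ?_
      rw [if_pos j.isLt]
      have hne : h ≠ 0 := ne_of_gt hh
      rcases hX (n + 1) j with hx | hx <;> rw [hx] <;> field_simp <;> ring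
    simp only [Finset.sum_Icc_succ_top (Nat.le_add_left 1 n), Nat.add_sub_cancel]
    linarith
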